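/- Suppose the Coxeter system (W, S) has Property F, and let w ∈ W_c. Then w is star reducible to a reduced product of n(w) distinct pairwise commuting generators from S. -/

import Mathlib

open CoxeterSystem

variable {B W : Type*} [Group W] {M : CoxeterMatrix B} (cs : CoxeterSystem M W)

/-- `m(s,t) ≥ 3`: `s` and `t` are distinct noncommuting generators
(`M s t = 0` encodes `m(s,t) = ∞`). -/
def Noncomm (M : CoxeterMatrix B) (s t : B) : Prop := M s t = 0 ∨ 3 ≤ M s t

/-- The longest element `w_{st}` of the rank-2 parabolic subgroup `⟨s,t⟩`
(meaningful when `3 ≤ M s t < ∞`). -/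
def longest (s t : B) : W := cs.wordProd (alternatingWord s t (M s t))

/-- `w` is complex: it admits a reduced factorization `x₁ · w_{st} · x₂` where `w_{st}`
is the longest element of a rank-2 parabolic subgroup `⟨s,t⟩` with `3 ≤ m(s,t) < ∞`. -/
def IsComplex (w : W) : Prop :=
  ∃ s t : B, 3 ≤ M s t ∧ ∃ x₁ x₂ : W,
    w = x₁ * longest cs s t * x₂ ∧
    cs.length w = cs.length x₁ + cs.length (longest cs s t : W) + cs.length x₂

/-- `w` is fully commutative, i.e. `w ∈ W_c`. -/
def FullyComm (w : W) : Prop := ¬ IsComplex cs w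

/-- `x` is weakly complex: `x` is complex and `x = s·u` reduced with `u` fully commutative. -/
def IsWeaklyComplex (x : W) : Prop :=
  IsComplex cs x ∧ ∃ (s : B) (u : W), FullyComm cs u ∧ x = cs.simple s * u ∧
    cs.length x = 1 + cs.length u

/-- The alternating product `t s t s ⋯` with `k` factors, beginning with `t`. -/
def altProd (t s : B) (k : ℕ) : W :=
  cs.wordProd ((List.range k).map (fun i => if i % 2 = 0 then t else s))

/-- The left descent set `𝓛(w)`. -/
def leftDescents (w : W) : Set B := {i | cs.IsLeftDescent w i}

/-- The right descent set `𝓡(w)`. -/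
def rightDescents (w : W) : Set B := {i | cs.IsRightDescent w i}

/-- `w` is a reduced product of distinct pairwise commuting generators. -/
def IsCommProd (w : W) : Prop :=
  ∃ l : List B, l.Nodup ∧ (∀ u ∈ l, ∀ u' ∈ l, u ≠ u' → M u u' = 2) ∧
    cs.IsReduced l ∧ w = cs.wordProd l

/-- `y` is left star reducible to `x` with respect to the pair `{s,t}`:
`x` and `y` lie in the same left `{s,t}`-string and `ℓ(x) = ℓ(y) − 1`. -/
def LeftStarReducible (s t : B) (y x : W) : Prop :=
  Noncomm M s t ∧
  ((cs.IsLeftDescent y s ∧ ¬ cs.IsLeftDescent y t ∧ x = cs.simple s * y ∧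
      cs.IsLeftDescent x t) ∨
   (cs.IsLeftDescent y t ∧ ¬ cs.IsLeftDescent y s ∧ x = cs.simple t * y ∧
      cs.IsLeftDescent x s))

/-- `y` is right star reducible to `x` with respect to the pair `{s,t}`. -/
def RightStarReducible (s t : B) (y x : W) : Prop :=
  Noncomm M s t ∧
  ((cs.IsRightDescent y s ∧ ¬ cs.IsRightDescent y t ∧ x = y * cs.simple s ∧
      cs.IsRightDescent x t) ∨
   (cs.IsRightDescent y t ∧ ¬ cs.IsRightDescent y s ∧ x = y * cs.simple t ∧
      cs.IsRightDescent x s))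

/-- `y` is star reducible to `x`: there is a (possibly empty) chain of left and right
star reductions from `y` to `x`. -/
def StarReducible (y x : W) : Prop :=
  Relation.ReflTransGen
    (fun a b => ∃ s t : B, LeftStarReducible cs s t a b ∨ RightStarReducible cs s t a b) y x

/-- Property F: every fully commutative element is star reducible to a reduced product of
distinct pairwise commuting generators. -/
def PropertyF : Prop := ∀ w : W, FullyComm cs w → ∃ x : W, StarReducible cs w x ∧ IsCommProd cs x

/-- `n(w)`: the maximum `k` such that `w` admits a reduced factorization `w = w₁·w₂·w₃`
with `w₂` a reduced product of `k` distinct pairwise commuting generators. -/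
noncomputable def nval (w : W) : ℕ :=
  sSup {k | ∃ w₁ w₂ w₃ : W, w = w₁ * w₂ * w₃ ∧
    cs.length w = cs.length w₁ + cs.length w₂ + cs.length w₃ ∧
    IsCommProd cs w₂ ∧ cs.length w₂ = k}

/-- The Bruhat order: `x ≤ w` iff some reduced word for `w` has a subword that is a
reduced word for `x`. -/
def BruhatLE (x w : W) : Prop :=
  ∃ l l' : List B, cs.IsReduced l ∧ cs.wordProd l = w ∧
    l'.Sublist l ∧ cs.IsReduced l' ∧ cs.wordProd l' = x

/-- `w = wI · wII` is the coset decomposition of `w` with respect to `I = {s,t}`: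
`wI ∈ W_I`, `𝓛(wII) ∩ I = ∅` and `ℓ(w) = ℓ(wI) + ℓ(wII)`. -/
def CosetDecompL (s t : B) (w wI wII : W) : Prop :=
  w = wI * wII ∧ wI ∈ Subgroup.closure {cs.simple s, cs.simple t} ∧
  ¬ cs.IsLeftDescent wII s ∧ ¬ cs.IsLeftDescent wII t ∧
  cs.length w = cs.length wI + cs.length wII

/-- `w = wII · wI` is the right coset decomposition of `w` with respect to `I = {s,t}`:
`wI ∈ W_I`, `𝓡(wII) ∩ I = ∅` and `ℓ(w) = ℓ(wII) + ℓ(wI)`. -/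
def CosetDecompR (s t : B) (w wII wI : W) : Prop :=
  w = wII * wI ∧ wI ∈ Subgroup.closure {cs.simple s, cs.simple t} ∧
  ¬ cs.IsRightDescent wII s ∧ ¬ cs.IsRightDescent wII t ∧
  cs.length w = cs.length wII + cs.length wI

/-- `k_ε(J) = (−1)^{|J ∩ ε⁻¹(0)|}` for a set `J` of generators. -/
noncomputable def kSet (ε : B → Bool) (J : Set B) : ℤ :=
  (-1) ^ (J ∩ {i | ε i = false}).ncard

/-- `k_ε(w) = k_ε(𝓛(w)) · k_ε(𝓡(w))`. -/
noncomputable def kElt (ε : B → Bool) (w : W) : ℤ :=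
  kSet ε (leftDescents cs w) * kSet ε (rightDescents cs w)

/-!
Let `y` be fully commutative with a reduced factorization `y = w₁ w₂ w₃`, where `w₂` is a product of
commuting generators. A left descent of a fully commutative reduced product `u v` is either a left
descent of `u`, or commutes with `u` and is a left descent of `v`; hence a star reduction `y ↦ s y`
cancels `s` from the front of `w₁`, `w₂` or `w₃`. Even when it is cancelled from `w₂`, the length of
`w₂` can be restored, because the generator `t` exposed by the reduction moves into the place of
`s`. Star reductions therefore preserve `n`, and `n` is the length on a product of commuting
generators.
-/

/-! ### The geometric representation -/

section Reflection

variable {K V : Type*} [Field K] [AddCommGroup V] [Module K V]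

theorem pow_apply_of_apply_eq_smul {T : Module.End K V} {ζ : K} {v : V} (h : T v = ζ • v) (n : ℕ) :
    (T ^ n) v = ζ ^ n • v := by
  induction n with
  | zero => simp
  | succ n ih => rw [pow_succ', Module.End.mul_apply, ih, map_smul, h, smul_smul, pow_succ]

theorem sum_pow_apply_eq_zero_of_apply_eq_smul {T : Module.End K V} {ζ : K} {v : V}
    (h : T v = ζ • v) (hζ : ζ ≠ 1) {m : ℕ} (hm : ζ ^ m = 1) :
    (∑ n ∈ Finset.range m, T ^ n) v = 0 := by
  simp only [LinearMap.sum_apply, pow_apply_of_apply_eq_smul h, ← Finset.sum_smul]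
  rw [geom_sum_eq hζ, hm, sub_self, zero_div, zero_smul]

variable {x y : V} {f g : Module.Dual K V} {η : K}

theorem preReflection_mul_preReflection_apply (hf : f x = 2) (hg : g y = 2) (hη : η ≠ 0)
    (hfy : f y = -(η + η⁻¹)) (hgx : g x = -(η + η⁻¹)) :
    (Module.preReflection x f * Module.preReflection y g) (η • x + y) = η ^ 2 • (η • x + y) := by
  have hgv : g (η • x + y) = 1 - η ^ 2 := by
    simp only [map_add, map_smul, smul_eq_mul, hgx, hg]
    field_simp
    ring
  have hfv : f (η • x + η ^ 2 • y) = η - η ^ 3 := by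
    simp only [map_add, map_smul, smul_eq_mul, hf, hfy]
    field_simp
    ring
  have hy : Module.preReflection y g (η • x + y) = η • x + η ^ 2 • y := by
    rw [Module.preReflection_apply, hgv]
    module
  rw [Module.End.mul_apply, hy, Module.preReflection_apply, hfv]
  module

/- The product `T` of the two reflections is diagonal on the plane `⟨x, y⟩`, with eigenvalues `η²`
and `η⁻²`, and `T - 1` maps everything into that plane, so `T ^ m - 1 = (∑ T ^ n) (T - 1)`
vanishes. -/
theorem preReflection_mul_preReflection_pow_eq_one (hf : f x = 2) (hg : g y = 2) (hη : η ≠ 0)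
    (hfy : f y = -(η + η⁻¹)) (hgx : g x = -(η + η⁻¹)) (hη₁ : η ^ 2 ≠ 1) {m : ℕ}
    (hm : (η ^ 2) ^ m = 1) :
    (Module.preReflection x f * Module.preReflection y g) ^ m = 1 := by
  set T := Module.preReflection x f * Module.preReflection y g with hT
  set P := ∑ n ∈ Finset.range m, T ^ n
  have hP : P (η • x + y) = 0 :=
    sum_pow_apply_eq_zero_of_apply_eq_smul
      (preReflection_mul_preReflection_apply hf hg hη hfy hgx) hη₁ hm
  have hP' : P (η⁻¹ • x + y) = 0 :=
    sum_pow_apply_eq_zero_of_apply_eq_smul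
      (preReflection_mul_preReflection_apply hf hg (inv_ne_zero hη) (by rw [hfy, inv_inv, add_comm])
        (by rw [hgx, inv_inv, add_comm])) (by rwa [inv_pow, inv_ne_one])
      (by rw [inv_pow, inv_pow, hm, inv_one])
  have hPx : P x = 0 := by
    have hsub : (η - η⁻¹) • P x = 0 := by
      rw [← map_smul, show (η - η⁻¹) • x = (η • x + y) - (η⁻¹ • x + y) by module, map_sub, hP, hP',
        sub_zero]
    refine (smul_eq_zero.mp hsub).resolve_left fun h ↦ hη₁ ?_
    rw [pow_two, mul_eq_one_iff_eq_inv₀ hη]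
    exact sub_eq_zero.mp h
  have hPy : P y = 0 := by simpa [hPx] using hP
  rw [← sub_eq_zero, ← geom_sum_mul]
  ext z
  have hz : (T - 1) z = -(f (z - g z • y) • x) - g z • y := by
    simp only [hT, LinearMap.sub_apply, Module.End.mul_apply, Module.preReflection_apply,
      Module.End.one_apply]
    abel
  rw [Module.End.mul_apply, hz, map_sub, map_neg, map_smul, map_smul, hPx, hPy]
  simp

end Reflection

/-- A complex number `η` whose square has multiplicative order exactly `m`, where order `0` means
infinite order. It is normalised so that `η + η⁻¹ = 2 cos (π / m)` for `m ≠ 0`. -/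
noncomputable def halfRoot (m : ℕ) : ℂ :=
  if m = 0 then 2 else Complex.exp (Real.pi * Complex.I / m)

theorem halfRoot_ne_zero (m : ℕ) : halfRoot m ≠ 0 := by
  rw [halfRoot]
  split_ifs
  · exact two_ne_zero
  · exact Complex.exp_ne_zero _

theorem halfRoot_one : halfRoot 1 = -1 := by
  simp [halfRoot]

theorem orderOf_halfRoot_sq (m : ℕ) : orderOf (halfRoot m ^ 2) = m := by
  rcases eq_or_ne m 0 with rfl | hm
  · rw [orderOf_eq_zero_iff']
    intro n hn h
    rw [halfRoot, if_pos rfl, ← pow_mul] at h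
    exact (Nat.one_lt_two_pow (n := 2 * n) (by omega)).ne' (by exact_mod_cast h)
  · rw [halfRoot, if_neg hm, ← Complex.exp_nat_mul, Nat.cast_ofNat,
      show (2 : ℂ) * (Real.pi * Complex.I / m) = 2 * Real.pi * Complex.I / m by ring]
    exact (Complex.isPrimitiveRoot_exp m hm).eq_orderOf.symm

/-- The entries of a complex Cartan matrix for `M`, namely `-2 cos (π / m)` when `m = M i j` is
finite. For `m = ∞` the entry is `-5 / 2` rather than the customary `-2`, so that the product of
the two reflections stays diagonalisable on the plane they span. -/
noncomputable def cartanEntry (M : CoxeterMatrix B) (i j : B) : ℂ :=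
  -(halfRoot (M i j) + (halfRoot (M i j))⁻¹)

/-- The simple coroots of the geometric representation on `B →₀ ℂ`, whose simple roots are the
standard basis vectors. -/
noncomputable def simpleCoroot (M : CoxeterMatrix B) (i : B) : Module.Dual ℂ (B →₀ ℂ) :=
  Finsupp.linearCombination ℂ (cartanEntry M i)

theorem simpleCoroot_single (i j : B) :
    simpleCoroot M i (Finsupp.single j 1) = cartanEntry M i j := by
  simp [simpleCoroot]

theorem simpleCoroot_single_self (i : B) : simpleCoroot M i (Finsupp.single i 1) = 2 := by
  rw [simpleCoroot_single, cartanEntry, M.diagonal, halfRoot_one]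
  norm_num

/-- The simple reflections of the geometric representation. -/
noncomputable def simpleReflection (M : CoxeterMatrix B) (i : B) : Module.End ℂ (B →₀ ℂ) :=
  Module.preReflection (Finsupp.single i 1) (simpleCoroot M i)

theorem isLiftable_simpleReflection (M : CoxeterMatrix B) : M.IsLiftable (simpleReflection M) := by
  intro i j
  rcases eq_or_ne i j with rfl | hij
  · rw [M.diagonal, pow_one]
    have hinv : Function.Involutive (simpleReflection M i) :=
      Module.involutive_preReflection (simpleCoroot_single_self i)
    exact LinearMap.ext hinv
  · refine preReflection_mul_preReflection_pow_eq_one (η := halfRoot (M i j))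
      (simpleCoroot_single_self i) (simpleCoroot_single_self j) (halfRoot_ne_zero _)
      (simpleCoroot_single i j) ?_ ?_ ?_
    · rw [simpleCoroot_single, cartanEntry, M.symmetric]
    · rw [Ne, ← orderOf_eq_one_iff, orderOf_halfRoot_sq]
      exact M.off_diagonal i j hij
    · exact orderOf_dvd_iff_pow_eq_one.mp (orderOf_halfRoot_sq _).dvd

/-- The geometric representation of a Coxeter group, used to see that the order of `s t` is not
smaller than `m(s,t)`. -/
noncomputable def geometricRep : W →* Module.End ℂ (B →₀ ℂ) :=
  cs.lift ⟨simpleReflection M, isLiftable_simpleReflection M⟩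

theorem geometricRep_simple (i : B) : geometricRep cs (cs.simple i) = simpleReflection M i :=
  cs.lift_apply_simple _ i

theorem orderOf_simple_mul_simple (i j : B) : orderOf (cs.simple i * cs.simple j) = M i j := by
  rcases eq_or_ne i j with rfl | hij
  · rw [cs.simple_mul_simple_self, orderOf_one, M.diagonal]
  refine (orderOf_dvd_of_pow_eq_one (cs.simple_mul_simple_pow i j)).antisymm ?_
  set k := orderOf (cs.simple i * cs.simple j)
  set η := halfRoot (M i j)
  set v : B →₀ ℂ := η • Finsupp.single i 1 + Finsupp.single j 1
  have hv : v j = 1 := by simp [v, hij]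
  have heigen : (simpleReflection M i * simpleReflection M j) v = η ^ 2 • v :=
    preReflection_mul_preReflection_apply (simpleCoroot_single_self i) (simpleCoroot_single_self j)
      (halfRoot_ne_zero _) (simpleCoroot_single i j)
      (by rw [simpleCoroot_single, cartanEntry, M.symmetric])
  have hpow : (simpleReflection M i * simpleReflection M j) ^ k = 1 := by
    rw [← geometricRep_simple cs, ← geometricRep_simple cs, ← map_mul, ← map_pow,
      pow_orderOf_eq_one, map_one]
  have hηv : (η ^ 2) ^ k • v = v := by
    rw [← pow_apply_of_apply_eq_smul heigen, hpow, Module.End.one_apply]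
  have hη : (η ^ 2) ^ k = 1 := by simpa [hv] using DFunLike.congr_fun hηv j
  simpa only [η, orderOf_halfRoot_sq] using orderOf_dvd_of_pow_eq_one hη

theorem simple_injective : Function.Injective cs.simple := by
  intro i j h
  by_contra hij
  apply M.off_diagonal i j hij
  rw [← orderOf_simple_mul_simple cs, h, cs.simple_mul_simple_self, orderOf_one]

/-! ### The exchange property -/

theorem map_alternatingWord_two_mul_prod {G : Type*} [Monoid G] (f : B → G) (i j : B) (n : ℕ) :
    ((alternatingWord i j (2 * n)).map f).prod = (f i * f j) ^ n := by
  induction n with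
  | zero => simp [alternatingWord]
  | succ n ih =>
    simp [mul_add, alternatingWord_succ', ih, pow_succ', mul_assoc]

theorem rightInvSeq_alternatingWord (i j : B) (n : ℕ) :
    cs.rightInvSeq (alternatingWord i j n) =
      (List.range n).reverse.map fun k ↦ cs.simple j * (cs.simple i * cs.simple j) ^ k := by
  induction n generalizing i j with
  | zero => simp [alternatingWord]
  | succ n ih =>
    have hconj (k : ℕ) : cs.simple j * (cs.simple i * (cs.simple j * cs.simple i) ^ k) *
        cs.simple j = cs.simple j * (cs.simple i * cs.simple j) ^ (k + 1) := by
      rw [← mul_pow_mul, pow_succ]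
      simp only [mul_assoc]
    rw [alternatingWord_succ, cs.rightInvSeq_concat, ih, List.range_succ_eq_map]
    simp [Function.comp_def, hconj]

open Classical in
/-- The action of a simple reflection `s` on `W × ZMod 2` by `(w, ε) ↦ (s w s, ε + [w = s])`. Only
reflections `w` matter: the second coordinate records the parity of the number of times `w` occurs
in an inversion sequence. -/
noncomputable def signedConj (i : B) : Function.End (W × ZMod 2) := fun p ↦
  (cs.simple i * p.1 * cs.simple i, p.2 + if p.1 = cs.simple i then 1 else 0)

open Classical in
theorem map_signedConj_prod_apply (ω : List B) (p : W × ZMod 2) :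
    (ω.map (signedConj cs)).prod p =
      (cs.wordProd ω * p.1 * (cs.wordProd ω)⁻¹, p.2 + (cs.rightInvSeq ω).count p.1) := by
  induction ω with
  | nil =>
    change p = _
    simp
  | cons i ω ih =>
    have hconj : cs.wordProd ω * (p.1 * (cs.wordProd ω)⁻¹) = cs.simple i ↔
        (cs.wordProd ω)⁻¹ * (cs.simple i * cs.wordProd ω) = p.1 := by
      rw [← mul_assoc, mul_inv_eq_iff_eq_mul, ← eq_inv_mul_iff_mul_eq, eq_comm]
    rw [List.map_cons, List.prod_cons]
    refine (congrArg (signedConj cs i) ih).trans ?_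
    simp [signedConj, rightInvSeq, List.count_cons, hconj, cs.wordProd_cons, mul_assoc, add_assoc]

theorem isLiftable_signedConj : M.IsLiftable (signedConj cs) := by
  classical
  intro i j
  have hprod : cs.wordProd (alternatingWord i j (2 * M i j)) = 1 := by
    rw [wordProd, map_alternatingWord_two_mul_prod, cs.simple_mul_simple_pow]
  funext p
  rw [← map_alternatingWord_two_mul_prod, map_signedConj_prod_apply, hprod,
    rightInvSeq_alternatingWord, List.map_reverse, List.count_reverse, two_mul, List.range_add]
  change _ = p
  simp [Function.comp_def, pow_add, CharTwo.add_self_eq_zero]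

open Classical in
theorem count_rightInvSeq_eq_of_wordProd_eq {ω ω' : List B} (h : cs.wordProd ω = cs.wordProd ω')
    (t : W) : ((cs.rightInvSeq ω).count t : ZMod 2) = (cs.rightInvSeq ω').count t := by
  have hprod (ω : List B) : (ω.map (signedConj cs)).prod =
      cs.lift ⟨signedConj cs, isLiftable_signedConj cs⟩ (cs.wordProd ω) := by
    simp [wordProd, map_list_prod, Function.comp_def, cs.lift_apply_simple]
  have heq := congrArg (fun F : Function.End (W × ZMod 2) ↦ (F (t, 0)).2)
    ((hprod ω).trans ((congrArg _ h).trans (hprod ω').symm))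
  simpa [map_signedConj_prod_apply] using heq

theorem perm_of_nodup_of_count_eq {α : Type*} [DecidableEq α] {l l' : List α} (hl : l.Nodup)
    (hl' : l'.Nodup) (h : ∀ a, (l.count a : ZMod 2) = l'.count a) : l.Perm l' := by
  refine (List.perm_ext_iff_of_nodup hl hl').mpr fun a ↦ ?_
  have ha := h a
  rw [hl.count, hl'.count] at ha
  split_ifs at ha <;> simp_all

theorem rightInvSeq_perm_of_wordProd_eq {ω ω' : List B} (hω : (cs.rightInvSeq ω).Nodup)
    (hω' : (cs.rightInvSeq ω').Nodup) (h : cs.wordProd ω = cs.wordProd ω') :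
    (cs.rightInvSeq ω).Perm (cs.rightInvSeq ω') := by
  classical
  exact perm_of_nodup_of_count_eq hω hω' (count_rightInvSeq_eq_of_wordProd_eq cs h)

theorem isReduced_of_nodup_rightInvSeq {ω : List B} (h : (cs.rightInvSeq ω).Nodup) :
    cs.IsReduced ω := by
  obtain ⟨ω', hω', heq⟩ := cs.exists_isReduced (cs.wordProd ω)
  have hlen := (rightInvSeq_perm_of_wordProd_eq cs h hω'.nodup_rightInvSeq heq).length_eq
  rw [length_rightInvSeq, length_rightInvSeq] at hlen
  rw [CoxeterSystem.IsReduced, heq, hω'.eq, hlen]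

theorem isReduced_alternatingWord {i j : B} {n : ℕ} (hn : M i j = 0 ∨ n ≤ M i j) :
    cs.IsReduced (alternatingWord i j n) := by
  apply isReduced_of_nodup_rightInvSeq
  rw [rightInvSeq_alternatingWord, List.map_reverse, List.nodup_reverse]
  refine List.nodup_range.map_on fun k hk k' hk' h ↦ ?_
  rw [List.mem_range] at hk hk'
  have hmod := pow_eq_pow_iff_modEq.mp (mul_left_cancel h)
  rw [orderOf_simple_mul_simple, Nat.ModEq] at hmod
  rcases hn with h0 | hn
  · simpa [h0] using hmod
  · rwa [Nat.mod_eq_of_lt (by omega), Nat.mod_eq_of_lt (by omega)] at hmod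

theorem leftInvSeq_perm_of_wordProd_eq {ω ω' : List B} (hω : cs.IsReduced ω)
    (hω' : cs.IsReduced ω') (h : cs.wordProd ω = cs.wordProd ω') :
    (cs.leftInvSeq ω).Perm (cs.leftInvSeq ω') := by
  have hperm := rightInvSeq_perm_of_wordProd_eq cs hω.reverse.nodup_rightInvSeq
    hω'.reverse.nodup_rightInvSeq (by simp [h])
  simpa [rightInvSeq_reverse] using hperm

theorem exists_simple_mul_wordProd_eq_wordProd_eraseIdx {ω : List B} (hω : cs.IsReduced ω) {i : B}
    (hi : cs.IsLeftDescent (cs.wordProd ω) i) :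
    ∃ k < ω.length, cs.simple i * cs.wordProd ω = cs.wordProd (ω.eraseIdx k) := by
  obtain ⟨ω', hω', heq⟩ := cs.exists_isReduced (cs.simple i * cs.wordProd ω)
  have heq' : cs.wordProd ω = cs.wordProd (i :: ω') := by
    rw [cs.wordProd_cons, ← heq, cs.simple_mul_simple_cancel_left]
  have hred : cs.IsReduced (i :: ω') := by
    rw [CoxeterSystem.IsReduced, ← heq', ← cs.isLeftDescent_iff.mp hi, heq, hω'.eq,
      List.length_cons]
  have hmem : cs.simple i ∈ cs.leftInvSeq ω := by
    rw [(leftInvSeq_perm_of_wordProd_eq cs hω hred heq').mem_iff, leftInvSeq]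
    exact List.mem_cons_self
  obtain ⟨k, hk, hki⟩ := List.getElem_of_mem hmem
  refine ⟨k, by simpa using hk, ?_⟩
  rw [← cs.getD_leftInvSeq_mul_wordProd, List.getD_eq_getElem _ _ hk, hki]

theorem exists_simple_mul_mul_eq_mul {u v : W} (hl : cs.length (u * v) = cs.length u + cs.length v)
    {s : B} (hs : cs.IsLeftDescent (u * v) s) (hu : ¬cs.IsLeftDescent u s) :
    ∃ v', cs.simple s * (u * v) = u * v' ∧ cs.length v' + 1 = cs.length v := by
  obtain ⟨ω, hω, rfl⟩ := cs.exists_isReduced u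
  obtain ⟨ω', hω', rfl⟩ := cs.exists_isReduced v
  rw [← cs.wordProd_append] at hl hs ⊢
  have hred : cs.IsReduced (ω ++ ω') := by
    rw [CoxeterSystem.IsReduced, hl, hω.eq, hω'.eq, List.length_append]
  obtain ⟨k, hk, heq⟩ := exists_simple_mul_wordProd_eq_wordProd_eraseIdx cs hred hs
  rcases lt_or_ge k ω.length with hlt | hge
  · rw [List.eraseIdx_append_of_lt_length hlt, cs.wordProd_append, cs.wordProd_append, ← mul_assoc,
      mul_left_inj] at heq
    have hle := cs.length_wordProd_le (ω.eraseIdx k)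
    rw [← heq, List.length_eraseIdx_of_lt hlt] at hle
    rw [cs.not_isLeftDescent_iff, hω.eq] at hu
    omega
  · rw [List.eraseIdx_append_of_length_le hge, cs.wordProd_append _ (ω'.eraseIdx _)] at heq
    refine ⟨cs.wordProd (ω'.eraseIdx (k - ω.length)), heq, ?_⟩
    have hle := cs.length_wordProd_le (ω'.eraseIdx (k - ω.length))
    rw [List.length_append] at hk
    rw [List.length_eraseIdx_of_lt (by omega)] at hle
    have hge' := cs.length_mul_le (cs.wordProd ω) (cs.wordProd (ω'.eraseIdx (k - ω.length)))
    rw [← heq] at hge'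
    have hdesc := cs.isLeftDescent_iff.mp hs
    rw [hω'.eq]
    rw [hω.eq, hω'.eq] at hl
    rw [hω.eq] at hge'
    omega

theorem exists_eq_wordProd_alternatingWord_mul {w : W} {i j : B} (hi : cs.IsLeftDescent w i)
    (hj : cs.IsLeftDescent w j) {n : ℕ} (hn : M i j = 0 ∨ n ≤ M i j) :
    ∃ v, w = cs.wordProd (alternatingWord i j n) * v ∧
      cs.length w = cs.length (cs.wordProd (alternatingWord i j n)) + cs.length v := by
  induction n with
  | zero => exact ⟨w, by simp [alternatingWord]⟩
  | succ n ih =>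
    obtain ⟨v, hw, hl⟩ := ih (by omega)
    have hred := isReduced_alternatingWord cs hn
    rw [alternatingWord_succ'] at hred ⊢
    generalize hc : (if Even n then j else i) = c at hred ⊢
    have hcw : cs.IsLeftDescent w c := by
      rw [← hc]
      split_ifs <;> assumption
    have hlen : cs.length (cs.wordProd (alternatingWord i j n)) + 1 =
        cs.length (cs.wordProd (c :: alternatingWord i j n)) := by
      rw [hred.eq, (isReduced_alternatingWord cs (n := n) (by omega)).eq, List.length_cons]
    obtain ⟨v', heq, hv'⟩ := exists_simple_mul_mul_eq_mul cs (hw ▸ hl) (hw ▸ hcw)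
      (by rw [cs.not_isLeftDescent_iff, ← cs.wordProd_cons, hlen])
    refine ⟨v', ?_, by omega⟩
    rw [cs.wordProd_cons, mul_assoc, ← heq, cs.simple_mul_simple_cancel_left, hw]

/-! ### Fully commutative elements -/

section FullyCommutative

variable {cs}

theorem isLeftDescent_mul {u v : W} (hl : cs.length (u * v) = cs.length u + cs.length v) {s : B}
    (hs : cs.IsLeftDescent u s) : cs.IsLeftDescent (u * v) s := by
  have hle := cs.length_mul_le (cs.simple s * u) v
  rw [CoxeterSystem.IsLeftDescent] at hs ⊢
  rw [← mul_assoc]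
  omega

theorem isLeftDescent_simple_mul {w : W} {i j : B} (hij : i ≠ j) (hi : cs.IsLeftDescent w i)
    (hj : cs.IsLeftDescent w j) : cs.IsLeftDescent (cs.simple i * w) j := by
  have hM : M i j = 0 ∨ 2 ≤ M i j := by
    have hone := M.off_diagonal i j hij
    omega
  obtain ⟨v, hw, hl⟩ := exists_eq_wordProd_alternatingWord_mul cs hi hj hM
  rw [(isReduced_alternatingWord cs hM).eq, length_alternatingWord] at hl
  have hiw : cs.simple i * w = cs.simple j * v := by
    rw [hw]
    simp [alternatingWord, cs.wordProd_cons, mul_assoc]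
  have hlen := cs.isLeftDescent_iff.mp hi
  rw [cs.isLeftDescent_iff, hiw, cs.simple_mul_simple_cancel_left, ← hiw]
  omega

theorem FullyComm.of_mul {u v : W} (h : FullyComm cs (u * v))
    (hl : cs.length (u * v) = cs.length u + cs.length v) : FullyComm cs v := by
  rintro ⟨s, t, hst, x₁, x₂, rfl, hv⟩
  refine h ⟨s, t, hst, u * x₁, x₂, by simp only [mul_assoc], ?_⟩
  have h₁ := cs.length_mul_le u x₁
  have h₂ := cs.length_mul_le (u * x₁) (longest cs s t * x₂)
  have h₃ := cs.length_mul_le (longest cs s t) x₂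
  simp only [mul_assoc] at h₂ hl hv ⊢
  omega

theorem FullyComm.simple_mul {w : W} (hw : FullyComm cs w) {s : B}
    (hs : cs.IsLeftDescent w s) : FullyComm cs (cs.simple s * w) := by
  have hlen := cs.isLeftDescent_iff.mp hs
  rw [← cs.simple_mul_simple_cancel_left s (w := w)] at hw
  refine hw.of_mul ?_
  rw [cs.simple_mul_simple_cancel_left, cs.length_simple]
  omega

theorem FullyComm.coxeterMatrix_eq_two {w : W} (hw : FullyComm cs w)
    {i j : B} (hij : i ≠ j) (hi : cs.IsLeftDescent w i) (hj : cs.IsLeftDescent w j) :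
    M i j = 2 := by
  by_contra hM
  have hone := M.off_diagonal i j hij
  rcases Nat.eq_zero_or_pos (M i j) with h0 | hpos
  · obtain ⟨v, -, hl⟩ :=
      exists_eq_wordProd_alternatingWord_mul cs hi hj (n := cs.length w + 1) (.inl h0)
    rw [(isReduced_alternatingWord cs (.inl h0)).eq, length_alternatingWord] at hl
    omega
  · obtain ⟨v, hv, hl⟩ := exists_eq_wordProd_alternatingWord_mul cs hi hj (.inr le_rfl)
    exact hw ⟨i, j, by omega, 1, v, by rw [one_mul, hv, longest], by
      rw [hl, cs.length_one, zero_add, longest]⟩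

variable (cs) in
theorem commute_simple_of_eq_two {i j : B} (h : M i j = 2) :
    Commute (cs.simple i) (cs.simple j) := by
  have hpow := cs.simple_mul_simple_pow i j
  rwa [h, pow_two, mul_eq_one_iff_eq_inv, mul_inv_rev, cs.inv_simple, cs.inv_simple] at hpow

theorem FullyComm.commute_and_isLeftDescent_of_mul {u v : W}
    (h : FullyComm cs (u * v)) (hl : cs.length (u * v) = cs.length u + cs.length v) {s : B}
    (hs : cs.IsLeftDescent (u * v) s) (hu : ¬cs.IsLeftDescent u s) :
    Commute (cs.simple s) u ∧ cs.IsLeftDescent v s := by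
  induction hn : cs.length u generalizing u with
  | zero =>
    obtain rfl := cs.length_eq_zero_iff.mp hn
    exact ⟨Commute.one_right _, by rwa [one_mul] at hs⟩
  | succ n ih =>
    obtain ⟨a, ha⟩ := cs.exists_leftDescent_of_ne_one (w := u) <| by
      rintro rfl
      simp at hn
    have has : a ≠ s := fun h ↦ hu (h ▸ ha)
    have hauv := isLeftDescent_mul hl ha
    have hcomm := commute_simple_of_eq_two cs (h.coxeterMatrix_eq_two has hauv hs)
    have hsuv := isLeftDescent_simple_mul has hauv hs
    have hfc := h.simple_mul hauv
    have hlen := cs.isLeftDescent_iff.mp ha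
    have hlen' := cs.isLeftDescent_iff.mp hauv
    rw [← mul_assoc] at hsuv hfc hlen'
    have hsu : ¬cs.IsLeftDescent (cs.simple a * u) s := by
      intro hsu
      rw [cs.not_isLeftDescent_iff] at hu
      rw [cs.isLeftDescent_iff, ← mul_assoc, ← hcomm.eq, mul_assoc] at hsu
      have hle := cs.length_mul_le (cs.simple a) (cs.simple a * (cs.simple s * u))
      rw [cs.simple_mul_simple_cancel_left, cs.length_simple] at hle
      omega
    obtain ⟨hsau, hv⟩ := ih hfc (by omega) hsuv hsu (by omega)
    refine ⟨?_, hv⟩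
    rw [← cs.simple_mul_simple_cancel_left a (w := u)]
    exact hcomm.symm.mul_right hsau

/-! ### Products of commuting generators -/

variable (cs) in
theorem wordProd_eq_of_perm {l l' : List B} (hperm : l.Perm l')
    (hcomm : ∀ u ∈ l, ∀ u' ∈ l, u ≠ u' → M u u' = 2) : cs.wordProd l = cs.wordProd l' := by
  refine (hperm.map cs.simple).prod_eq' ?_
  rw [List.pairwise_map]
  refine List.pairwise_of_forall_mem_list fun u hu u' hu' ↦ ?_
  rcases eq_or_ne u u' with rfl | hne
  · exact Commute.refl _
  · exact commute_simple_of_eq_two cs (hcomm u hu u' hu' hne)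

theorem isLeftDescent_wordProd_cons {s : B} {l : List B} (h : cs.IsReduced (s :: l)) :
    cs.IsLeftDescent (cs.wordProd (s :: l)) s := by
  have hle := cs.length_wordProd_le l
  rw [CoxeterSystem.IsLeftDescent, h.eq, cs.wordProd_cons, cs.simple_mul_simple_cancel_left,
    List.length_cons]
  omega

theorem isLeftDescent_wordProd_iff_mem {l : List B} (hred : cs.IsReduced l)
    (hcomm : ∀ u ∈ l, ∀ u' ∈ l, u ≠ u' → M u u' = 2) {s : B} :
    cs.IsLeftDescent (cs.wordProd l) s ↔ s ∈ l := by
  constructor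
  · intro hs
    obtain ⟨k, hk, heq⟩ := exists_simple_mul_wordProd_eq_wordProd_eraseIdx cs hred hs
    rw [wordProd_eq_of_perm cs (List.getElem_cons_eraseIdx_perm hk).symm hcomm, cs.wordProd_cons,
      ← mul_assoc, mul_eq_right, mul_eq_one_iff_eq_inv, cs.inv_simple] at heq
    exact simple_injective cs heq ▸ List.getElem_mem hk
  · intro hs
    obtain ⟨a, b, rfl⟩ := List.mem_iff_append.mp hs
    rw [CoxeterSystem.IsReduced] at hred
    rw [wordProd_eq_of_perm cs List.perm_middle hcomm] at hred ⊢
    refine isLeftDescent_wordProd_cons ?_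
    rw [CoxeterSystem.IsReduced, hred, List.perm_middle.length_eq]

theorem IsCommProd.exists_eq_wordProd_cons {w : W} (hw : IsCommProd cs w)
    {s : B} (hs : cs.IsLeftDescent w s) :
    ∃ l : List B, (s :: l).Nodup ∧ (∀ u ∈ s :: l, ∀ u' ∈ s :: l, u ≠ u' → M u u' = 2) ∧
      cs.IsReduced (s :: l) ∧ w = cs.wordProd (s :: l) := by
  obtain ⟨l, hl, hcomm, hred, rfl⟩ := hw
  rw [isLeftDescent_wordProd_iff_mem hred hcomm] at hs
  obtain ⟨a, b, rfl⟩ := List.mem_iff_append.mp hs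
  have hperm : (a ++ s :: b).Perm (s :: (a ++ b)) := List.perm_middle
  have heq := wordProd_eq_of_perm cs hperm hcomm
  refine ⟨a ++ b, hperm.nodup_iff.mp hl, fun u hu u' hu' ↦
    hcomm u (hperm.mem_iff.mpr hu) u' (hperm.mem_iff.mpr hu'), ?_, heq⟩
  rw [CoxeterSystem.IsReduced, ← heq, hred.eq, hperm.length_eq]

theorem IsCommProd.simple_mul {w : W} (hw : IsCommProd cs w) {s : B}
    (hs : cs.IsLeftDescent w s) : IsCommProd cs (cs.simple s * w) := by
  obtain ⟨l, hl, hcomm, hred, rfl⟩ := hw.exists_eq_wordProd_cons hs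
  exact ⟨l, hl.of_cons, fun u hu u' hu' ↦
    hcomm u (List.mem_cons_of_mem s hu) u' (List.mem_cons_of_mem s hu'), hred.drop 1,
    by rw [cs.wordProd_cons, cs.simple_mul_simple_cancel_left]⟩

theorem IsCommProd.coxeterMatrix_eq_two {w : W} (hw : IsCommProd cs w)
    {s t : B} (hs : cs.IsLeftDescent w s) (ht : cs.IsLeftDescent (cs.simple s * w) t) :
    M s t = 2 := by
  obtain ⟨l, hl, hcomm, hred, rfl⟩ := hw.exists_eq_wordProd_cons hs
  have hred' : cs.IsReduced l := hred.drop 1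
  rw [cs.wordProd_cons, cs.simple_mul_simple_cancel_left, isLeftDescent_wordProd_iff_mem
    hred' fun u hu u' hu' ↦
      hcomm u (List.mem_cons_of_mem s hu) u' (List.mem_cons_of_mem s hu')] at ht
  exact hcomm s List.mem_cons_self t (List.mem_cons_of_mem s ht)
    fun h ↦ (List.nodup_cons.mp hl).1 (h ▸ ht)

theorem IsCommProd.simple_mul_of_fullyComm_mul {u v : W}
    (hu : IsCommProd cs u) (h : FullyComm cs (u * v))
    (hl : cs.length (u * v) = cs.length u + cs.length v) {t : B}
    (ht : cs.IsLeftDescent (u * v) t) (htu : ¬cs.IsLeftDescent u t) :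
    IsCommProd cs (cs.simple t * u) := by
  obtain ⟨l, hnodup, hcomm, hred, rfl⟩ := hu
  have hdesc {a : B} (ha : a ∈ l) : cs.IsLeftDescent (cs.wordProd l) a :=
    (isLeftDescent_wordProd_iff_mem hred hcomm).mpr ha
  have htl : t ∉ l := fun hmem ↦ htu (hdesc hmem)
  have hcomm_t : ∀ a ∈ l, M t a = 2 := fun a ha ↦
    h.coxeterMatrix_eq_two (fun hta ↦ htl (hta ▸ ha)) ht (isLeftDescent_mul hl (hdesc ha))
  refine ⟨t :: l, List.nodup_cons.mpr ⟨htl, hnodup⟩, ?_, ?_, (cs.wordProd_cons t l).symm⟩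
  · simp only [List.mem_cons]
    rintro a (rfl | ha) b (rfl | hb) hab
    · exact absurd rfl hab
    · exact hcomm_t b hb
    · rw [M.symmetric, hcomm_t a ha]
    · exact hcomm a ha b hb hab
  · rw [CoxeterSystem.IsReduced, cs.wordProd_cons, cs.not_isLeftDescent_iff.mp htu, hred.eq,
      List.length_cons]

theorem IsCommProd.inv {w : W} (h : IsCommProd cs w) :
    IsCommProd cs w⁻¹ := by
  obtain ⟨l, hl, hcomm, hred, rfl⟩ := h
  exact ⟨l.reverse, by simpa using hl, by simpa using hcomm, hred.reverse, by simp⟩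

variable (cs) in
/-- The lengths of the commuting products that occur as the middle factor of a reduced
factorization of `w`, so that `n(w)` is their maximum. -/
def commFactorLengths (w : W) : Set ℕ :=
  {k | ∃ w₁ w₂ w₃ : W, w = w₁ * w₂ * w₃ ∧
    cs.length w = cs.length w₁ + cs.length w₂ + cs.length w₃ ∧
    IsCommProd cs w₂ ∧ cs.length w₂ = k}

variable (cs) in
theorem nval_eq_sSup_commFactorLengths (w : W) : nval cs w = sSup (commFactorLengths cs w) := rfl

theorem IsCommProd.nval_eq_length {w : W} (h : IsCommProd cs w) :
    nval cs w = cs.length w := by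
  rw [nval_eq_sSup_commFactorLengths]
  apply IsGreatest.csSup_eq
  refine ⟨⟨1, w, 1, by simp, by simp, h, rfl⟩, ?_⟩
  rintro k ⟨w₁, w₂, w₃, -, hl, -, rfl⟩
  omega

variable (cs) in
theorem commFactorLengths_subset_inv (w : W) :
    commFactorLengths cs w ⊆ commFactorLengths cs w⁻¹ := by
  rintro k ⟨w₁, w₂, w₃, rfl, hl, hc, rfl⟩
  refine ⟨w₃⁻¹, w₂⁻¹, w₁⁻¹, by simp only [mul_inv_rev, mul_assoc], ?_, hc.inv, cs.length_inv w₂⟩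
  simp only [cs.length_inv]
  omega

variable (cs) in
theorem commFactorLengths_inv (w : W) : commFactorLengths cs w⁻¹ = commFactorLengths cs w := by
  refine Set.Subset.antisymm ?_ (commFactorLengths_subset_inv cs w)
  simpa only [inv_inv] using commFactorLengths_subset_inv cs w⁻¹

theorem commFactorLengths_simple_mul_subset {y : W} {s : B} (hs : cs.IsLeftDescent y s) :
    commFactorLengths cs (cs.simple s * y) ⊆ commFactorLengths cs y := by
  rintro k ⟨w₁, w₂, w₃, heq, hl, hc, rfl⟩
  have hy : y = cs.simple s * w₁ * w₂ * w₃ := by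
    rw [← cs.simple_mul_simple_cancel_left s (w := y), heq]
    simp only [mul_assoc]
  refine ⟨cs.simple s * w₁, w₂, w₃, hy, ?_, hc, rfl⟩
  have hlen := cs.isLeftDescent_iff.mp hs
  have h₁ := cs.length_mul_le (cs.simple s) w₁
  have h₂ := cs.length_mul_le (cs.simple s * w₁) w₂
  have h₃ := cs.length_mul_le (cs.simple s * w₁ * w₂) w₃
  rw [cs.length_simple] at h₁
  rw [← hy] at h₃
  omega

/- The generator `t` is not a letter of `s v`, since all of those commute with `s`, so it comes from
`w`, and it commutes with `s v`. -/
theorem FullyComm.length_mem_commFactorLengths_of_swap {u v w : W} {s t : B}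
    (h : FullyComm cs (u * (cs.simple s * v) * w))
    (hl : cs.length (u * (cs.simple s * v) * w) =
      cs.length u + cs.length (cs.simple s * v) + cs.length w)
    (hv : IsCommProd cs v) (hst : M s t ≠ 2) (hs : cs.IsLeftDescent v s)
    (ht : cs.IsLeftDescent (u * (cs.simple s * v) * w) t) (htu : ¬cs.IsLeftDescent u t) :
    cs.length v ∈ commFactorLengths cs (u * (cs.simple s * v) * w) := by
  have hsv := cs.isLeftDescent_iff.mp hs
  have hv' : IsCommProd cs (cs.simple s * v) := hv.simple_mul hs
  have htv : ¬cs.IsLeftDescent (cs.simple s * v) t := fun h ↦ hst (hv.coxeterMatrix_eq_two hs h)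
  generalize cs.simple s * v = v' at *
  rw [mul_assoc] at h ht hl
  have hle := cs.length_mul_le u (v' * w)
  have hle' := cs.length_mul_le v' w
  have huvw : cs.length (u * (v' * w)) = cs.length u + cs.length (v' * w) := by omega
  have hvw : cs.length (v' * w) = cs.length v' + cs.length w := by omega
  obtain ⟨-, ht⟩ := h.commute_and_isLeftDescent_of_mul huvw ht htu
  have hfc := h.of_mul huvw
  obtain ⟨htcv, htw⟩ := hfc.commute_and_isLeftDescent_of_mul hvw ht htv
  have htw' := cs.isLeftDescent_iff.mp htw
  have htv' := cs.not_isLeftDescent_iff.mp htv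
  refine ⟨u, cs.simple t * v', cs.simple t * w, ?_, ?_,
    hv'.simple_mul_of_fullyComm_mul hfc hvw ht htv, by omega⟩
  · rw [htcv.eq, mul_assoc, mul_assoc, mul_assoc, cs.simple_mul_simple_cancel_left]
  · rw [mul_assoc]
    omega

theorem FullyComm.commFactorLengths_subset_simple_mul {y : W}
    (hy : FullyComm cs y) {s t : B} (hst : M s t ≠ 2) (hs : cs.IsLeftDescent y s)
    (hyt : ¬cs.IsLeftDescent y t) (ht : cs.IsLeftDescent (cs.simple s * y) t) :
    commFactorLengths cs y ⊆ commFactorLengths cs (cs.simple s * y) := by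
  rintro k ⟨w₁, w₂, w₃, rfl, hl, hc, rfl⟩
  have hlen := cs.isLeftDescent_iff.mp hs
  have hfc := hy.simple_mul hs
  rw [mul_assoc] at hy hs hyt
  have h₁₂₃ : cs.length (w₁ * (w₂ * w₃)) = cs.length w₁ + cs.length (w₂ * w₃) := by
    have hle := cs.length_mul_le w₁ (w₂ * w₃)
    have hle' := cs.length_mul_le w₂ w₃
    rw [mul_assoc] at hl
    omega
  by_cases hs₁ : cs.IsLeftDescent w₁ s
  · have hlen₁ := cs.isLeftDescent_iff.mp hs₁
    exact ⟨cs.simple s * w₁, w₂, w₃, by simp only [mul_assoc], by omega, hc, rfl⟩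
  obtain ⟨hcomm₁, hs₂₃⟩ := hy.commute_and_isLeftDescent_of_mul h₁₂₃ hs hs₁
  by_cases hs₂ : cs.IsLeftDescent w₂ s
  · have hlen₂ := cs.isLeftDescent_iff.mp hs₂
    have heq : cs.simple s * (w₁ * w₂ * w₃) = w₁ * (cs.simple s * w₂) * w₃ := by
      simp only [← mul_assoc, hcomm₁.eq]
    rw [heq] at hfc ht hlen ⊢
    exact hfc.length_mem_commFactorLengths_of_swap (by omega) hc hst hs₂ ht
      fun ht₁ ↦ hyt (isLeftDescent_mul h₁₂₃ ht₁)
  · have h₂₃ : cs.length (w₂ * w₃) = cs.length w₂ + cs.length w₃ := by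
      rw [mul_assoc] at hl
      omega
    obtain ⟨hcomm₂, hs₃⟩ := (hy.of_mul h₁₂₃).commute_and_isLeftDescent_of_mul h₂₃ hs₂₃ hs₂
    have hlen₃ := cs.isLeftDescent_iff.mp hs₃
    have heq : cs.simple s * (w₁ * w₂ * w₃) = w₁ * w₂ * (cs.simple s * w₃) := by
      rw [← mul_assoc, (hcomm₁.mul_right hcomm₂).eq, mul_assoc]
    exact ⟨w₁, w₂, cs.simple s * w₃, heq, by omega, hc, rfl⟩

variable (cs) in
theorem longest_inv (s t : B) : (longest cs s t)⁻¹ = longest cs s t ∨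
    (longest cs s t)⁻¹ = longest cs t s := by
  simp only [longest, cs.prod_alternatingWord_eq_mul_pow, M.symmetric t s]
  split_ifs
  · right
    rw [one_mul, one_mul, ← inv_pow, mul_inv_rev, cs.inv_simple, cs.inv_simple]
  · left
    rw [mul_inv_rev, ← inv_pow, mul_inv_rev, cs.inv_simple, cs.inv_simple, mul_pow_mul]

theorem IsComplex.inv {w : W} (h : IsComplex cs w) :
    IsComplex cs w⁻¹ := by
  obtain ⟨s, t, hst, x₁, x₂, rfl, hl⟩ := h
  have hlen := cs.length_inv (longest cs s t)
  rcases longest_inv cs s t with h | h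
  · refine ⟨s, t, hst, x₂⁻¹, x₁⁻¹, by simp only [mul_inv_rev, mul_assoc, h], ?_⟩
    simp only [cs.length_inv]
    omega
  · refine ⟨t, s, by rwa [M.symmetric t s], x₂⁻¹, x₁⁻¹,
      by simp only [mul_inv_rev, mul_assoc, h], ?_⟩
    simp only [cs.length_inv]
    rw [h] at hlen
    omega

theorem FullyComm.inv {w : W} (h : FullyComm cs w) :
    FullyComm cs w⁻¹ := fun hc ↦ h (by simpa only [inv_inv] using hc.inv)

theorem Noncomm.ne_two {s t : B} (h : Noncomm M s t) : M s t ≠ 2 := by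
  rcases h with h | h <;> omega

theorem Noncomm.symm {s t : B} (h : Noncomm M s t) : Noncomm M t s := by
  rwa [Noncomm, M.symmetric]

/-! ### Star reductions -/

theorem LeftStarReducible.exists_isLeftDescent {s t : B} {y x : W}
    (h : LeftStarReducible cs s t y x) :
    ∃ a b : B, M a b ≠ 2 ∧ cs.IsLeftDescent y a ∧ ¬cs.IsLeftDescent y b ∧ x = cs.simple a * y ∧
      cs.IsLeftDescent x b := by
  obtain ⟨hst, h | h⟩ := h
  · exact ⟨s, t, hst.ne_two, h⟩
  · exact ⟨t, s, hst.symm.ne_two, h⟩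

theorem LeftStarReducible.fullyComm {s t : B} {y x : W}
    (h : LeftStarReducible cs s t y x) (hy : FullyComm cs y) : FullyComm cs x := by
  obtain ⟨a, b, -, ha, -, rfl, -⟩ := h.exists_isLeftDescent
  exact hy.simple_mul ha

theorem LeftStarReducible.commFactorLengths_eq {s t : B} {y x : W}
    (h : LeftStarReducible cs s t y x) (hy : FullyComm cs y) :
    commFactorLengths cs y = commFactorLengths cs x := by
  obtain ⟨a, b, hab, ha, hb, rfl, hab'⟩ := h.exists_isLeftDescent
  exact (hy.commFactorLengths_subset_simple_mul hab ha hb hab').antisymm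
    (commFactorLengths_simple_mul_subset ha)

theorem RightStarReducible.inv {s t : B} {y x : W}
    (h : RightStarReducible cs s t y x) : LeftStarReducible cs s t y⁻¹ x⁻¹ := by
  obtain ⟨hst, ⟨hs, hs', rfl, ht⟩ | ⟨ht, ht', rfl, hs⟩⟩ := h
  · exact ⟨hst, .inl ⟨cs.isLeftDescent_inv_iff.mpr hs, cs.isLeftDescent_inv_iff.not.mpr hs',
      by rw [mul_inv_rev, cs.inv_simple], cs.isLeftDescent_inv_iff.mpr ht⟩⟩
  · exact ⟨hst, .inr ⟨cs.isLeftDescent_inv_iff.mpr ht, cs.isLeftDescent_inv_iff.not.mpr ht',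
      by rw [mul_inv_rev, cs.inv_simple], cs.isLeftDescent_inv_iff.mpr hs⟩⟩

theorem RightStarReducible.fullyComm {s t : B} {y x : W}
    (h : RightStarReducible cs s t y x) (hy : FullyComm cs y) : FullyComm cs x := by
  simpa only [inv_inv] using (h.inv.fullyComm hy.inv).inv

theorem RightStarReducible.commFactorLengths_eq {s t : B} {y x : W}
    (h : RightStarReducible cs s t y x) (hy : FullyComm cs y) :
    commFactorLengths cs y = commFactorLengths cs x := by
  simpa only [commFactorLengths_inv] using h.inv.commFactorLengths_eq hy.inv

theorem StarReducible.fullyComm {y x : W} (h : StarReducible cs y x)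
    (hy : FullyComm cs y) : FullyComm cs x := by
  induction h with
  | refl => exact hy
  | tail _ hstep ih =>
    obtain ⟨s, t, hleft | hright⟩ := hstep
    · exact hleft.fullyComm ih
    · exact hright.fullyComm ih

theorem StarReducible.commFactorLengths_eq {y x : W}
    (h : StarReducible cs y x) (hy : FullyComm cs y) :
    commFactorLengths cs y = commFactorLengths cs x := by
  induction h with
  | refl => rfl
  | tail hchain hstep ih =>
    have hfc := StarReducible.fullyComm hchain hy
    obtain ⟨s, t, hleft | hright⟩ := hstep
    · exact ih.trans (hleft.commFactorLengths_eq hfc)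
    · exact ih.trans (hright.commFactorLengths_eq hfc)

theorem StarReducible.nval_eq {y x : W} (h : StarReducible cs y x)
    (hy : FullyComm cs y) : nval cs y = nval cs x := by
  rw [nval_eq_sSup_commFactorLengths, nval_eq_sSup_commFactorLengths, h.commFactorLengths_eq hy]

end FullyCommutative

/-- Corollary 7.3: if `W` has Property F and `w ∈ W_c`, then `w` is star reducible to a
reduced product of `n(w)` distinct pairwise commuting generators. -/
theorem statement8 (hF : PropertyF cs) (w : W) (hw : FullyComm cs w) :
    ∃ (x : W) (l : List B), StarReducible cs w x ∧ l.Nodup ∧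
      (∀ u ∈ l, ∀ u' ∈ l, u ≠ u' → M u u' = 2) ∧ cs.IsReduced l ∧
      x = cs.wordProd l ∧ l.length = nval cs w := by
  obtain ⟨x, hwx, hx⟩ := hF w hw
  have hn : nval cs w = cs.length x := (hwx.nval_eq hw).trans hx.nval_eq_length
  obtain ⟨l, hl, hcomm, hred, rfl⟩ := hx
  exact ⟨_, l, hwx, hl, hcomm, hred, rfl, by rw [hn, hred.eq]⟩
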